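/- Let n ≥ 2, let G be the complete directed graph on n nodes with unitary travel times (including self-loops), let π = (1/n)𝟙_n, and let P = (a − b) I_n + b 𝟙_n 𝟙_n^T for reals a ≥ 0 and b > 0 with a + (n−1)b = 1. Then P is row-stochastic with stationary distribution π, and its return time entropy equals J(P) = −a log a − (n−1) b log( (n−1) b² ) − (n−1)(1−b) log(1−b). -/

import Mathlib

open scoped BigOperators
open Real

/-- First hitting time probabilities for unitary travel times:
`F_1 = P` and `F_k(i,j) = Σ_{h≠j} p_{ih} F_{k−1}(h,j)` for `k ≥ 2`. -/
def IsHittingProbUnit {n : ℕ} (P : Matrix (Fin n) (Fin n) ℝ)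
    (F : ℕ → Fin n → Fin n → ℝ) : Prop :=
  (∀ i j, F 1 i j = P i j) ∧
    ∀ k : ℕ, 2 ≤ k → ∀ i j,
      F k i j = ∑ h : Fin n, if h = j then 0 else P i h * F (k - 1) h j

/-!
From every state other than `j`, the chain enters `j` with the same probability `b`, so the hitting
time of `j` is geometric with parameter `b`. Hence a return to `j` either takes one step, or leaves
`j` first, with probability `1 - P j j`, and then waits for this geometric time. The entropy
series is therefore one term plus a series `∑ k, negMulLog (c * r ^ k)`, which the product rule for
`negMulLog` splits into `∑ r ^ k` and `∑ k * r ^ k`.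
-/

theorem sum_ite_eq_add_const {ι R : Type*} [Fintype ι] [DecidableEq ι] [NonAssocSemiring R]
    (i : ι) (x y : R) : ∑ j, ((if i = j then x else 0) + y) = x + Fintype.card ι * y := by
  simp [Finset.sum_add_distrib]

theorem hasSum_negMulLog_mul_geometric (c : ℝ) {r : ℝ} (hr : |r| < 1) :
    HasSum (fun k : ℕ => negMulLog (c * r ^ k))
      (negMulLog c / (1 - r) + c * negMulLog r / (1 - r) ^ 2) := by
  have hgeom := (hasSum_geometric_of_norm_lt_one hr).mul_left (negMulLog c)
  have harith := (hasSum_coe_mul_geometric_of_norm_lt_one hr).mul_left (-c * log r)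
  have hterm (k : ℕ) :
      negMulLog (c * r ^ k) = negMulLog c * r ^ k + -c * log r * (k * r ^ k) := by
    rw [negMulLog_mul]
    simp only [negMulLog, log_pow]
    ring
  have hvalue : negMulLog c / (1 - r) + c * negMulLog r / (1 - r) ^ 2 =
      negMulLog c * (1 - r)⁻¹ + -c * log r * (r / (1 - r) ^ 2) := by
    simp only [negMulLog]
    ring
  simpa only [hterm, hvalue] using hgeom.add harith

namespace IsHittingProbUnit

variable {n : ℕ} {P : Matrix (Fin n) (Fin n) ℝ} {F : ℕ → Fin n → Fin n → ℝ} {j : Fin n} {b : ℝ}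

theorem apply_add_two (hF : IsHittingProbUnit P F) (k : ℕ) (i j : Fin n) :
    F (k + 2) i j = ∑ h ∈ Finset.univ.erase j, P i h * F (k + 1) h j := by
  rw [hF.2 (k + 2) (Nat.le_add_left 2 k) i j, ← Finset.filter_ne', Finset.sum_filter]
  simp only [ne_eq, ite_not, Nat.add_succ_sub_one]

theorem apply_add_two_of_const (hF : IsHittingProbUnit P F) {i : Fin n}
    (hrow : ∑ h, P i h = 1) {k : ℕ} {c : ℝ} (hc : ∀ h ≠ j, F (k + 1) h j = c) :
    F (k + 2) i j = (1 - P i j) * c := by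
  calc F (k + 2) i j = ∑ h ∈ Finset.univ.erase j, P i h * F (k + 1) h j := hF.apply_add_two k i j
    _ = ∑ h ∈ Finset.univ.erase j, P i h * c :=
      Finset.sum_congr rfl fun h hh => by rw [hc h (Finset.ne_of_mem_erase hh)]
    _ = (1 - P i j) * c := by
      rw [← Finset.sum_mul, Finset.sum_erase_eq_sub (Finset.mem_univ j), hrow]

theorem apply_succ_eq_geometric_of_ne (hF : IsHittingProbUnit P F)
    (hrow : ∀ i ≠ j, ∑ h, P i h = 1) (hcol : ∀ i ≠ j, P i j = b) (k : ℕ) {i : Fin n} (hij : i ≠ j) :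
    F (k + 1) i j = b * (1 - b) ^ k := by
  induction k generalizing i with
  | zero => rw [hF.1, hcol i hij, pow_zero, mul_one]
  | succ k ih =>
    rw [hF.apply_add_two_of_const (hrow i hij) fun _ => ih, hcol i hij]
    ring

theorem apply_add_two_self_eq_geometric (hF : IsHittingProbUnit P F)
    (hrow : ∀ i, ∑ h, P i h = 1) (hcol : ∀ i ≠ j, P i j = b) (k : ℕ) :
    F (k + 2) j j = (1 - P j j) * b * (1 - b) ^ k := by
  rw [mul_assoc]
  exact hF.apply_add_two_of_const (hrow j) fun _ =>
    hF.apply_succ_eq_geometric_of_ne (fun i _ => hrow i) hcol k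

theorem hasSum_negMulLog_apply_self (hF : IsHittingProbUnit P F) (hrow : ∀ i, ∑ h, P i h = 1)
    (hcol : ∀ i ≠ j, P i j = b) (hb : |1 - b| < 1) :
    HasSum (fun k : ℕ => negMulLog (F (k + 1) j j))
      (negMulLog (P j j) +
        (1 - P j j) * (negMulLog (1 - b) / b - log ((1 - P j j) * b))) := by
  have hb0 : b ≠ 0 := by
    rintro rfl
    norm_num at hb
  have hvalue : (1 - P j j) * (negMulLog (1 - b) / b - log ((1 - P j j) * b)) =
      negMulLog ((1 - P j j) * b) / (1 - (1 - b)) +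
        (1 - P j j) * b * negMulLog (1 - b) / (1 - (1 - b)) ^ 2 := by
    rw [sub_sub_cancel]
    simp only [negMulLog]
    field_simp
    ring
  have htail : HasSum (fun k : ℕ => negMulLog (F (k + 2) j j))
      ((1 - P j j) * (negMulLog (1 - b) / b - log ((1 - P j j) * b))) := by
    simpa only [hF.apply_add_two_self_eq_geometric hrow hcol, hvalue] using
      hasSum_negMulLog_mul_geometric ((1 - P j j) * b) hb
  simpa only [zero_add, hF.1 j j] using
    HasSum.zero_add (f := fun k => negMulLog (F (k + 1) j j)) htail

end IsHittingProbUnit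

/-- on the complete graph on `n ≥ 2` nodes with unitary travel
times, the chain `P = (a − b)I_n + b𝟙𝟙ᵀ` with `a ≥ 0`, `b > 0`,
`a + (n−1)b = 1` is row-stochastic with uniform stationary distribution
`π = (1/n)𝟙`, and its return time entropy equals
`−a log a − (n−1) b log((n−1)b²) − (n−1)(1−b) log(1−b)`. -/
theorem complete_graph_special_structure_entropy {n : ℕ} (hn : 2 ≤ n)
    (a b : ℝ) (ha : 0 ≤ a) (hb : 0 < b) (hab : a + ((n : ℝ) - 1) * b = 1)
    (P : Matrix (Fin n) (Fin n) ℝ)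
    (hP : ∀ i j, P i j = (if i = j then a - b else 0) + b)
    (F : ℕ → Fin n → Fin n → ℝ) (hF : IsHittingProbUnit P F) :
    (∀ i, ∑ j, P i j = 1) ∧
    (∀ j, ∑ i, (1 / (n : ℝ)) * P i j = 1 / (n : ℝ)) ∧
    (∑ i : Fin n, (1 / (n : ℝ)) * ∑' k : ℕ, Real.negMulLog (F (k + 1) i i)) =
      -a * Real.log a - ((n : ℝ) - 1) * b * Real.log (((n : ℝ) - 1) * b ^ 2) -
        ((n : ℝ) - 1) * (1 - b) * Real.log (1 - b) := by
  have hn2 : (2 : ℝ) ≤ n := by exact_mod_cast hn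
  have hrow (i) : ∑ j, P i j = 1 := by
    simp only [hP, sum_ite_eq_add_const, Fintype.card_fin]
    linarith
  have hsymm (i j) : P i j = P j i := by simp only [hP, eq_comm]
  have hdiag (i) : P i i = a := by rw [hP, if_pos rfl, sub_add_cancel]
  have hoff (i j) (hij : i ≠ j) : P i j = b := by rw [hP, if_neg hij, zero_add]
  have hb1 : |1 - b| < 1 := by
    have hb_le : b ≤ (n - 1) * b := le_mul_of_one_le_left hb.le (by linarith)
    exact abs_lt.2 ⟨by linarith, by linarith⟩
  have hleave : 1 - a = ((n : ℝ) - 1) * b := by linarith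
  refine ⟨hrow, fun j => ?_, ?_⟩
  · simp only [← Finset.mul_sum, hsymm _ j, hrow, mul_one]
  · have hentropy (i) : ∑' k, negMulLog (F (k + 1) i i) =
        negMulLog a + (n - 1) * b * (negMulLog (1 - b) / b - log ((n - 1) * b * b)) := by
      rw [(hF.hasSum_negMulLog_apply_self hrow (hoff · i) hb1).tsum_eq, hdiag, hleave]
    simp only [hentropy, Finset.sum_const, Finset.card_univ, Fintype.card_fin, nsmul_eq_mul]
    rw [mul_assoc _ b b, ← pow_two, negMulLog, negMulLog]
    field_simp
    ring
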